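/- Let A be a Noetherian ring of global dimension n. Then the perfect derived category Perf(A) is generated by A in n cones, i.e. every bounded complex of finitely generated projective A-modules lies in ⟨A⟩_n, where ⟨A⟩_0 denotes direct summands of finite direct sums of shifts of A and ⟨A⟩_n is built using n cone operations. In particular the Rouquier dimension of Perf(A) is at most n. -/

import Mathlib

open CategoryTheory Limits Pretriangulated

universe u v

namespace TriDim

variable {T : Type u} [Category.{v} T] [HasZeroObject T] [Preadditive T] [HasShift T ℤ]
  [∀ n : ℤ, (CategoryTheory.shiftFunctor T n).Additive] [Pretriangulated T]

/-- `[E]₀` : objects isomorphic to finite direct sums of shifts of `E`. -/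
def isSumOfShifts (E X : T) : Prop :=
  ∃ (n : ℕ) (f : Fin n → ℤ), Nonempty (X ≅ ⨁ fun i => (shiftFunctor T (f i)).obj E)

/-- `[E]ₙ` : objects obtained from `[E]₀` by `n` cones. -/
def gen (E : T) : ℕ → Set T
  | 0 => {X | isSumOfShifts E X}
  | n + 1 => {F | ∃ Tr : Triangle T, Tr ∈ (distTriang T) ∧
      Nonempty (Tr.obj₂ ≅ F) ∧ Tr.obj₁ ∈ gen E n ∧ isSumOfShifts E Tr.obj₃}

/-- `⟨E⟩ₙ` : direct summands of objects of `[E]ₙ`. -/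
def thick (E : T) (n : ℕ) : Set T :=
  {X | ∃ Z ∈ gen E n, ∃ (s : X ⟶ Z) (r : Z ⟶ X), s ≫ r = 𝟙 X}

variable (T) in
/-- The Rouquier dimension of `T` is at most `n`:
there is a strong generator generating in `n` cones. -/
def rdimLE (n : ℕ) : Prop := ∃ E : T, ∀ X : T, X ∈ thick E n

end TriDim

/-!
A bounded object `X` of the derived category with finitely generated homology is covered by a finite
sum `S` of shifts of `R` which is surjective on homology. The long exact sequence of the triangle
`S ⟶ X ⟶ X'` then identifies the homology of `X'` with the syzygies of the homology of `X` coming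
from the projective modules `Hⁱ(S)`; they are finitely generated because `R` is Noetherian, and
their projective dimension has dropped by one. When the homology of `X` is projective, `X` is
isomorphic to its homology with zero differentials, so `X ⟶ X'`, which vanishes on homology, is zero
and `X` is a direct summand of `S`. The octahedral axiom makes the star operation associative, so
`X'` in `⟨R⟩ₙ` gives `X` in `⟨R⟩ₙ₊₁`.
-/

namespace TriDim

variable {T : Type u} [Category.{v} T] [HasZeroObject T] [Preadditive T] [HasShift T ℤ]
  [∀ n : ℤ, (CategoryTheory.shiftFunctor T n).Additive] [Pretriangulated T] {E X Y Z : T}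

theorem isSumOfShifts_biproduct (E : T) {ι : Type*} [Finite ι] (m : ι → ℤ) :
    isSumOfShifts E (⨁ fun i => (shiftFunctor T (m i)).obj E) := by
  obtain ⟨k, ⟨e⟩⟩ := Finite.exists_equiv_fin ι
  exact ⟨k, m ∘ e.symm, ⟨biproduct.whiskerEquiv e fun i => eqToIso (by simp)⟩⟩

theorem prop_of_isSumOfShifts {P : ObjectProperty T} [P.IsClosedUnderIsomorphisms]
    [P.IsStableUnderShift ℤ] [P.IsClosedUnderFiniteProducts] (hE : P E)
    (hX : isSumOfShifts E X) : P X := by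
  obtain ⟨k, m, ⟨e⟩⟩ := hX
  refine P.prop_of_iso (e ≪≫ biproduct.isoProduct _).symm ?_
  exact P.prop_limit _ fun ⟨i⟩ => P.le_shift (m i) _ hE

theorem mem_gen_iff [IsTriangulated T] {n : ℕ} :
    X ∈ gen E n ↔ ObjectProperty.extensionProductIter (isSumOfShifts E) n X := by
  induction n generalizing X with
  | zero => rfl
  | succ n ih =>
    rw [ObjectProperty.extensionProductIter_succ']
    constructor
    · rintro ⟨Tr, hTr, ⟨e⟩, h₁, h₃⟩
      exact ObjectProperty.prop_of_iso _ e ⟨_, _, _, _, _, hTr, ih.1 h₁, h₃⟩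
    · rintro ⟨_, _, _, _, _, hTr, h₁, h₃⟩
      exact ⟨_, hTr, ⟨Iso.refl _⟩, ih.2 h₁, h₃⟩

theorem mem_thick_iff [IsTriangulated T] {n : ℕ} :
    X ∈ thick E n ↔
      (ObjectProperty.extensionProductIter (isSumOfShifts E) n).retractClosure X := by
  constructor
  · rintro ⟨Z, hZ, s, r, hsr⟩
    exact ⟨Z, mem_gen_iff.1 hZ, ⟨⟨s, r, hsr⟩⟩⟩
  · rintro ⟨Z, hZ, ⟨s, r, hsr⟩⟩
    exact ⟨Z, mem_gen_iff.2 hZ, s, r, hsr⟩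

theorem mem_thick_succ_of_distTriang [IsTriangulated T] {n : ℕ} {f : X ⟶ Y} {g : Y ⟶ Z}
    {h : Z ⟶ X⟦(1 : ℤ)⟧} (hT : Triangle.mk f g h ∈ distTriang T) (hX : isSumOfShifts E X)
    (hZ : Z ∈ thick E n) : Y ∈ thick E (n + 1) := by
  rw [mem_thick_iff] at hZ ⊢
  rw [ObjectProperty.extensionProductIter_succ]
  exact ObjectProperty.extensionProduct_retractClosure_retractClosure_le _ _ _
    ⟨_, _, _, _, _, hT, ObjectProperty.le_retractClosure _ _ hX, hZ⟩

theorem mem_thick_zero_of_distTriang {f : X ⟶ Y} {h : Z ⟶ X⟦(1 : ℤ)⟧}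
    (hT : Triangle.mk f 0 h ∈ distTriang T) (hX : isSumOfShifts E X) : Y ∈ thick E 0 := by
  obtain ⟨s, hs⟩ := Triangle.coyoneda_exact₂ _ hT (𝟙 Y) comp_zero
  exact ⟨X, hX, s, f, hs.symm⟩

end TriDim

universe w

open DerivedCategory

namespace ZeroDifferential

variable {C : Type u} [Category.{v} C] [Abelian C] {W K L : CochainComplex C ℤ}

theorem exists_lift_of_homologyMap_eq_zero (hW : ∀ i j, W.d i j = 0) {g : W ⟶ L} {i : ℤ}
    [Projective (W.X i)] (hg : HomologicalComplex.homologyMap g i = 0) {j : ℤ}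
    (hij : (ComplexShape.up ℤ).Rel j i) : ∃ h : W.X i ⟶ L.X j, h ≫ L.d j i = g.f i := by
  have hπ : HomologicalComplex.cyclesMap g i ≫ L.homologyπ i = 0 := by
    rw [← HomologicalComplex.homologyπ_naturality, hg, comp_zero]
  have boundaries_exact : (ShortComplex.mk (L.toCycles j i) (L.homologyπ i)
      (L.toCycles_comp_homologyπ j i)).Exact :=
    ShortComplex.exact_of_g_is_cokernel _
      (L.homologyIsCokernel j i ((ComplexShape.up ℤ).prev_eq' hij))
  have := W.isIso_iCycles i _ rfl (hW _ _)
  obtain ⟨h, hh⟩ : ∃ h, h ≫ L.toCycles j i =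
      inv (W.iCycles i) ≫ HomologicalComplex.cyclesMap g i :=
    ⟨_, boundaries_exact.liftFromProjective_comp _ (by simp [hπ])⟩
  exact ⟨h, by simpa using hh =≫ L.iCycles i⟩

theorem nonempty_homotopy_zero (hW : ∀ i j, W.d i j = 0) (hP : ∀ i, Projective (W.X i))
    {g : W ⟶ L} (hg : ∀ i, HomologicalComplex.homologyMap g i = 0) :
    Nonempty (Homotopy g 0) := by
  choose h hh using fun i j (hij : (ComplexShape.up ℤ).Rel j i) =>
    exists_lift_of_homologyMap_eq_zero hW (hg i) hij
  have hgh : g = Homotopy.nullHomotopicMap' h := by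
    ext i
    rw [Homotopy.nullHomotopicMap'_f (k₂ := i - 1) (k₁ := i) (k₀ := i + 1) (by simp) (by simp),
      hW, hh, zero_comp, zero_add]
  exact ⟨(Homotopy.ofEq hgh).trans (Homotopy.nullHomotopy' h)⟩

theorem isKProjective (hW : ∀ i j, W.d i j = 0) (hP : ∀ i, Projective (W.X i)) :
    W.IsKProjective where
  nonempty_homotopy_zero _ hL :=
    nonempty_homotopy_zero hW hP fun i => (hL i).isZero_homology.eq_of_tgt _ _

theorem exists_homologyMap_eq (hW : ∀ i j, W.d i j = 0) (hP : ∀ i, Projective (W.X i))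
    (y : ∀ i, W.homology i ⟶ K.homology i) :
    ∃ φ : W ⟶ K, ∀ i, HomologicalComplex.homologyMap φ i = y i := by
  have hι (i : ℤ) : IsIso (W.iCycles i) := W.isIso_iCycles i _ rfl (hW _ _)
  choose s hs using fun i => Projective.factors (inv (W.iCycles i) ≫ W.homologyπ i ≫ y i)
    (K.homologyπ i)
  let φ : W ⟶ K :=
    { f := fun i => s i ≫ K.iCycles i
      comm' := fun i j _ => by simp [hW] }
  refine ⟨φ, fun i => ?_⟩
  have cyclesMap_φ : HomologicalComplex.cyclesMap φ i = W.iCycles i ≫ s i := by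
    rw [← cancel_mono (K.iCycles i)]
    simp [φ]
  rw [← cancel_epi (W.homologyπ i), HomologicalComplex.homologyπ_naturality, cyclesMap_φ,
    Category.assoc, hs, IsIso.hom_inv_id_assoc]

end ZeroDifferential

namespace ProjectiveHomology

variable {C : Type u} [Category.{v} C] [Abelian C]

/-- The homology of a cochain complex, regarded as a complex with zero differentials. It serves as
a K-projective model of any complex with projective homology. -/
noncomputable def homologyComplex (K : CochainComplex C ℤ) : CochainComplex C ℤ where
  X i := K.homology i
  d _ _ := 0

theorem exists_quasiIso_homologyComplex {K : CochainComplex C ℤ}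
    (hK : ∀ i, Projective (K.homology i)) : ∃ φ : homologyComplex K ⟶ K, QuasiIso φ := by
  let W := homologyComplex K
  have hι (i : ℤ) : IsIso (W.iCycles i) := W.isIso_iCycles i _ rfl rfl
  have hπ (i : ℤ) : IsIso (W.homologyπ i) := W.isIso_homologyπ _ i rfl rfl
  let e (i : ℤ) : W.homology i ≅ W.X i :=
    (asIso (W.homologyπ i)).symm ≪≫ asIso (W.iCycles i)
  obtain ⟨φ, hφ⟩ := ZeroDifferential.exists_homologyMap_eq (W := W) (fun _ _ => rfl) hK
    fun i => (e i).hom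
  refine ⟨φ, ⟨fun i => ?_⟩⟩
  rw [quasiIsoAt_iff_isIso_homologyMap, hφ]
  exact (e i).isIso_hom

variable [HasDerivedCategory.{w} C]

theorem Q_map_surjective (K L : CochainComplex C ℤ) [K.IsKProjective] :
    Function.Surjective (Q.map : (K ⟶ L) → (Q.obj K ⟶ Q.obj L)) := by
  intro f
  obtain ⟨g', hg'⟩ := (CochainComplex.IsKProjective.Qh_map_bijective K _).surjective
    ((quotientCompQhIso C).hom.app K ≫ f ≫ (quotientCompQhIso C).inv.app L)
  obtain ⟨g, rfl⟩ := (HomotopyCategory.quotient _ _).map_surjective g'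
  refine ⟨g, ?_⟩
  have naturality := (quotientCompQhIso C).hom.naturality g
  rw [Functor.comp_map, hg'] at naturality
  simpa using naturality.symm

/-- The homology of a cochain complex, computed in the derived category. This is
`homologyFunctorFactors` with `K.homology i` as its syntactic target. -/
noncomputable def homologyQIso (K : CochainComplex C ℤ) (i : ℤ) :
    (homologyFunctor C i).obj (Q.obj K) ≅ K.homology i :=
  (homologyFunctorFactors C i).app K

theorem homologyQIso_hom_naturality {K L : CochainComplex C ℤ} (g : K ⟶ L) (i : ℤ) :
    (homologyFunctor C i).map (Q.map g) ≫ (homologyQIso L i).hom =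
      (homologyQIso K i).hom ≫ HomologicalComplex.homologyMap g i :=
  homologyFunctorFactors_hom_naturality g i

variable {Y Z : DerivedCategory C}

theorem exists_iso_Q_obj_zeroDifferential
    (hY : ∀ i, Projective ((homologyFunctor C i).obj Y)) :
    ∃ W : CochainComplex C ℤ, (∀ i j, W.d i j = 0) ∧ (∀ i, Projective (W.X i)) ∧
      Nonempty (Q.obj W ≅ Y) := by
  have hK (i : ℤ) : Projective ((Q.objPreimage Y).homology i) :=
    Projective.of_iso ((homologyFunctor C i).mapIso (Q.objObjPreimageIso Y).symm ≪≫
      homologyQIso _ i) (hY i)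
  obtain ⟨φ, _⟩ := exists_quasiIso_homologyComplex hK
  exact ⟨homologyComplex _, fun _ _ => rfl, hK, ⟨asIso (Q.map φ) ≪≫ Q.objObjPreimageIso Y⟩⟩

theorem exists_homologyFunctor_map_eq (hY : ∀ i, Projective ((homologyFunctor C i).obj Y))
    (y : ∀ i, (homologyFunctor C i).obj Y ⟶ (homologyFunctor C i).obj Z) :
    ∃ f : Y ⟶ Z, ∀ i, (homologyFunctor C i).map f = y i := by
  obtain ⟨W, hW, hP, ⟨e⟩⟩ := exists_iso_Q_obj_zeroDifferential hY
  let e' := Q.objObjPreimageIso Z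
  obtain ⟨φ, hφ⟩ := ZeroDifferential.exists_homologyMap_eq hW hP fun i =>
    (homologyQIso W i).inv ≫ (homologyFunctor C i).map e.hom ≫ y i ≫
      (homologyFunctor C i).map e'.inv ≫ (homologyQIso _ i).hom
  refine ⟨e.inv ≫ Q.map φ ≫ e'.hom, fun i => ?_⟩
  have map_φ : (homologyFunctor C i).map (Q.map φ) =
      (homologyFunctor C i).map e.hom ≫ y i ≫ (homologyFunctor C i).map e'.inv := by
    rw [← cancel_mono (homologyQIso _ i).hom, homologyQIso_hom_naturality, hφ]
    simp
  simp [map_φ]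

theorem eq_zero_of_homologyFunctor_map_eq_zero
    (hY : ∀ i, Projective ((homologyFunctor C i).obj Y)) {f : Y ⟶ Z}
    (hf : ∀ i, (homologyFunctor C i).map f = 0) : f = 0 := by
  obtain ⟨W, hW, hP, ⟨e⟩⟩ := exists_iso_Q_obj_zeroDifferential hY
  let e' := Q.objObjPreimageIso Z
  have := ZeroDifferential.isKProjective hW hP
  obtain ⟨g, hg⟩ := Q_map_surjective W _ (e.hom ≫ f ≫ e'.inv)
  obtain ⟨H⟩ := ZeroDifferential.nonempty_homotopy_zero hW hP (g := g) fun i => by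
    rw [← cancel_epi (homologyQIso W i).hom, ← homologyQIso_hom_naturality, hg]
    simp [hf]
  have : e.hom ≫ f ≫ e'.inv = 0 := by rw [← hg, Q_map_eq_of_homotopy _ H, Functor.map_zero]
  simpa using this

theorem exists_homologyFunctor_map_eq_of_degree
    (hY : ∀ i, Projective ((homologyFunctor C i).obj Y)) {i : ℤ}
    (y : (homologyFunctor C i).obj Y ⟶ (homologyFunctor C i).obj Z) :
    ∃ f : Y ⟶ Z, (homologyFunctor C i).map f = y := by
  classical
  obtain ⟨f, hf⟩ := exists_homologyFunctor_map_eq hY (Pi.single i y)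
  exact ⟨f, by rw [hf, Pi.single_eq_same]⟩

end ProjectiveHomology

namespace HomologyCover

section Abelian

variable {C : Type u} [Category.{v} C] [Abelian C]

theorem projective_biproduct {ι : Type*} (P : ι → C) [HasBiproduct P]
    (hP : ∀ i, Projective (P i)) : Projective (⨁ P) where
  factors f e _ :=
    ⟨biproduct.desc fun i => Projective.factorThru (biproduct.ι P i ≫ f) e, by cat_disch⟩

variable [HasDerivedCategory.{w} C]

theorem isZero_homologyFunctor_singleFunctor (P : C) {i : ℤ} (hi : i ≠ 0) :
    IsZero ((homologyFunctor C i).obj ((singleFunctor C 0).obj P)) := by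
  rcases hi.lt_or_gt with hneg | hpos
  · exact isZero_of_isGE _ 0 i hneg
  · exact isZero_of_isLE _ 0 i hpos

theorem projective_homologyFunctor_singleFunctor (P : C) [Projective P] (i : ℤ) :
    Projective ((homologyFunctor C i).obj ((singleFunctor C 0).obj P)) := by
  by_cases hi : i = 0
  · subst hi
    exact Projective.of_iso ((singleFunctorCompHomologyFunctorIso C 0).app P).symm ‹_›
  · have hzero := isZero_homologyFunctor_singleFunctor P hi
    exact Projective.of_iso hzero.isoZero.symm inferInstance

attribute [local instance] Abelian.hasFiniteBiproducts

theorem exists_homologyFunctor_iso_biproduct {E S : DerivedCategory C}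
    (hS : TriDim.isSumOfShifts E S) (i : ℤ) : ∃ (k : ℕ) (m : Fin k → ℤ),
      Nonempty ((homologyFunctor C i).obj S ≅ ⨁ fun j => (homologyFunctor C (m j)).obj E) := by
  obtain ⟨k, m, ⟨e⟩⟩ := hS
  exact ⟨k, fun j => m j + i, ⟨(homologyFunctor C i).mapIso e ≪≫
    (homologyFunctor C i).mapBiproduct _ ≪≫
    biproduct.mapIso fun j => ((homologyFunctor C 0).shiftIso (m j) i (m j + i) rfl).app E⟩⟩

theorem projective_homologyFunctor_of_isSumOfShifts {E S : DerivedCategory C}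
    (hE : ∀ i, Projective ((homologyFunctor C i).obj E)) (hS : TriDim.isSumOfShifts E S) (i : ℤ) :
    Projective ((homologyFunctor C i).obj S) := by
  obtain ⟨k, m, ⟨e⟩⟩ := exists_homologyFunctor_iso_biproduct hS i
  exact Projective.of_iso e.symm (projective_biproduct _ fun j => hE (m j))

theorem exists_map_of_shift_singleFunctor {P : C} [Projective P] {Y : DerivedCategory C} {i : ℤ}
    (y : P ⟶ (homologyFunctor C i).obj Y) :
    ∃ (φ : ((singleFunctor C 0).obj P)⟦-i⟧ ⟶ Y)
      (t : P ⟶ (homologyFunctor C i).obj (((singleFunctor C 0).obj P)⟦-i⟧)),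
      t ≫ (homologyFunctor C i).map φ = y := by
  let E := (singleFunctor C 0).obj P
  let shiftIso (j k : ℤ) (h : -i + j = k) :
      (homologyFunctor C j).obj (E⟦-i⟧) ≅ (homologyFunctor C k).obj E :=
    ((homologyFunctor C 0).shiftIso (-i) j k h).app E
  have hE (j : ℤ) : Projective ((homologyFunctor C j).obj (E⟦-i⟧)) :=
    Projective.of_iso (shiftIso j _ rfl).symm (projective_homologyFunctor_singleFunctor P _)
  let e : (homologyFunctor C i).obj (E⟦-i⟧) ≅ P :=
    shiftIso i 0 (by simp) ≪≫ (singleFunctorCompHomologyFunctorIso C 0).app P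
  obtain ⟨φ, hφ⟩ := ProjectiveHomology.exists_homologyFunctor_map_eq_of_degree hE (e.hom ≫ y)
  exact ⟨φ, e.inv, by rw [hφ, e.inv_hom_id_assoc]⟩

theorem bounded_singleFunctor (P : C) :
    TStructure.t.bounded ((singleFunctor C 0).obj P) :=
  ⟨⟨0, inferInstance⟩, ⟨0, inferInstance⟩⟩

theorem bounded_Q_obj {K : CochainComplex C ℤ} {a b : ℤ}
    (hK : ∀ i, (i < a ∨ b < i) → IsZero (K.X i)) : TStructure.t.bounded (Q.obj K) := by
  have : K.IsStrictlyGE a := K.isStrictlyGE_iff a |>.2 fun i hi => hK i (.inl hi)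
  have : K.IsStrictlyLE b := K.isStrictlyLE_iff b |>.2 fun i hi => hK i (.inr hi)
  exact ⟨⟨a, inferInstance⟩, ⟨b, inferInstance⟩⟩

variable {X Y Z : DerivedCategory C} {f : X ⟶ Y} {g : Y ⟶ Z} {h : Z ⟶ X⟦(1 : ℤ)⟧}

theorem shortExact_homologyFunctor_cone (hT : Triangle.mk f g h ∈ distTriang (DerivedCategory C))
    (hf : ∀ i, Epi ((homologyFunctor C i).map f)) (i : ℤ) :
    (ShortComplex.mk (HomologySequence.δ (Triangle.mk f g h) i (i + 1) rfl)
      ((homologyFunctor C (i + 1)).map f) (HomologySequence.δ_comp _ hT i _ rfl)).ShortExact where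
  exact := HomologySequence.exact₁ _ hT i _ rfl
  mono_f := (HomologySequence.exact₃ _ hT i _ rfl).mono_g
    ((HomologySequence.epi_homologyMap_mor₁_iff _ hT i).1 (hf i))
  epi_g := hf (i + 1)

theorem hasProjectiveDimensionLE_homologyFunctor_cone
    (hT : Triangle.mk f g h ∈ distTriang (DerivedCategory C))
    (hX : ∀ i, Projective ((homologyFunctor C i).obj X))
    (hf : ∀ i, Epi ((homologyFunctor C i).map f)) {n : ℕ}
    (hY : ∀ i, HasProjectiveDimensionLE ((homologyFunctor C i).obj Y) (n + 1)) (i : ℤ) :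
    HasProjectiveDimensionLE ((homologyFunctor C i).obj Z) n :=
  ((shortExact_homologyFunctor_cone hT hf i).hasProjectiveDimensionLT_X₃_iff n (hX (i + 1))).1
    (hY (i + 1))

end Abelian

section Module

variable {R : Type u} [Ring R]

theorem hasProjectiveDimensionLT_of_resolution {n : ℕ} {M : ModuleCat.{v} R}
    {P : ℕ → ModuleCat.{v} R} {f : ∀ i, P (i + 1) ⟶ P i} {π : P 0 ⟶ M}
    (hP : ∀ i, Projective (P i)) (hπ : Function.Surjective π) (hfπ : Function.Exact (f 0) π)
    (hf : ∀ i, Function.Exact (f (i + 1)) (f i)) (hzero : ∀ i, n ≤ i → IsZero (P i)) :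
    HasProjectiveDimensionLT M n := by
  induction n generalizing M P with
  | zero =>
    have := ModuleCat.subsingleton_of_isZero (hzero 0 le_rfl)
    have := hπ.subsingleton
    exact (ModuleCat.isZero_of_subsingleton M).hasProjectiveDimensionLT_zero
  | succ n ih =>
    let f₀ : P 1 ⟶ ModuleCat.of R (LinearMap.ker π.hom) :=
      ModuleCat.ofHom ((f 0).hom.codRestrict _ fun x => (hfπ _).2 ⟨x, rfl⟩)
    have hf₀ : Function.Surjective f₀ := fun ⟨y, hy⟩ =>
      let ⟨x, hx⟩ := (hfπ y).1 hy
      ⟨x, Subtype.ext hx⟩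
    have hff₀ : Function.Exact (f 1) f₀ := fun x => Subtype.ext_iff.trans (hf 0 x)
    have hker : HasProjectiveDimensionLT (ModuleCat.of R (LinearMap.ker π.hom)) n :=
      ih (fun i => hP (i + 1)) hf₀ hff₀ (fun i => hf (i + 1)) fun i hi => hzero (i + 1) (by omega)
    have hP₀ : HasProjectiveDimensionLT (P 0) (n + 1) := inferInstance
    exact (LinearMap.shortExact_shortComplexKer (f := π.hom) hπ).hasProjectiveDimensionLT_X₃
      n hker hP₀

variable [HasDerivedCategory.{w} (ModuleCat.{v} R)]

theorem finite_homologyFunctor_singleFunctor (M : ModuleCat.{v} R) [Module.Finite R M] (i : ℤ) :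
    Module.Finite R
      ((homologyFunctor (ModuleCat R) i).obj ((singleFunctor (ModuleCat R) 0).obj M)) := by
  by_cases hi : i = 0
  · subst hi
    exact Module.Finite.equiv (M := M)
      ((singleFunctorCompHomologyFunctorIso _ 0).app M).symm.toLinearEquiv
  · have := ModuleCat.subsingleton_of_isZero (isZero_homologyFunctor_singleFunctor M hi)
    infer_instance

theorem finite_homologyFunctor_of_isSumOfShifts {E S : DerivedCategory (ModuleCat.{v} R)}
    (hE : ∀ i, Module.Finite R ((homologyFunctor (ModuleCat R) i).obj E))
    (hS : TriDim.isSumOfShifts E S) (i : ℤ) :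
    Module.Finite R ((homologyFunctor (ModuleCat R) i).obj S) := by
  obtain ⟨k, m, ⟨e⟩⟩ := exists_homologyFunctor_iso_biproduct hS i
  exact Module.Finite.equiv (e ≪≫ ModuleCat.biproductIsoPi _).symm.toLinearEquiv

theorem finite_homologyFunctor_Q_obj [IsNoetherianRing R]
    {K : CochainComplex (ModuleCat.{v} R) ℤ} {i : ℤ} [Module.Finite R (K.X i)] :
    Module.Finite R ((homologyFunctor (ModuleCat R) i).obj (Q.obj K)) := by
  have : Module.Finite R (K.cycles i) := Module.Finite.of_injective (K.iCycles i).hom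
    ((ModuleCat.mono_iff_injective _).1 inferInstance)
  have : Module.Finite R (K.homology i) := Module.Finite.of_surjective (K.homologyπ i).hom
    ((ModuleCat.epi_iff_surjective _).1 inferInstance)
  exact Module.Finite.equiv (ProjectiveHomology.homologyQIso K i).symm.toLinearEquiv

theorem finite_homologyFunctor_cone [IsNoetherianRing R]
    {X Y Z : DerivedCategory (ModuleCat.{v} R)} {f : X ⟶ Y} {g : Y ⟶ Z} {h : Z ⟶ X⟦(1 : ℤ)⟧}
    (hT : Triangle.mk f g h ∈ distTriang (DerivedCategory (ModuleCat R)))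
    (hX : ∀ i, Module.Finite R ((homologyFunctor (ModuleCat R) i).obj X))
    (hf : ∀ i, Epi ((homologyFunctor (ModuleCat R) i).map f)) (i : ℤ) :
    Module.Finite R ((homologyFunctor (ModuleCat R) i).obj Z) := by
  have := hX (i + 1)
  let δ : (homologyFunctor (ModuleCat R) i).obj Z ⟶ (homologyFunctor (ModuleCat R) (i + 1)).obj X :=
    HomologySequence.δ (Triangle.mk f g h) i (i + 1) rfl
  have hδ : Mono δ := (shortExact_homologyFunctor_cone hT hf i).mono_f
  exact Module.Finite.of_injective δ.hom ((ModuleCat.mono_iff_injective δ).1 hδ)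

end Module

section Cover

variable (R : Type u) [Ring R]

theorem projective_of_self : Projective (ModuleCat.of R R) :=
  ModuleCat.projective_of_free (Module.Basis.singleton (Fin 1) R)

variable [HasDerivedCategory.{w} (ModuleCat.{u} R)]

/-- The ring `R` as an object of its derived category, concentrated in degree `0`. It is the
generator whose shifts cover the complexes with finitely generated homology. -/
noncomputable abbrev ringObject : DerivedCategory (ModuleCat.{u} R) :=
  (singleFunctor (ModuleCat R) 0).obj (ModuleCat.of R R)

variable {R} {Y : DerivedCategory (ModuleCat.{u} R)}

theorem exists_mem_range_homologyFunctor_map {i : ℤ}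
    (y : (homologyFunctor (ModuleCat R) i).obj Y) :
    ∃ φ : (ringObject R)⟦-i⟧ ⟶ Y,
      y ∈ LinearMap.range ((homologyFunctor (ModuleCat R) i).map φ).hom := by
  have := projective_of_self R
  obtain ⟨φ, t, ht⟩ := exists_map_of_shift_singleFunctor
    (ModuleCat.ofHom (LinearMap.toSpanSingleton R _ y))
  refine ⟨φ, t (1 : R), ?_⟩
  rw [← ModuleCat.comp_apply, ht]
  exact one_smul R y

theorem exists_isSumOfShifts_epi_homologyFunctor_map (hb : TStructure.t.bounded Y)
    (hfin : ∀ i, Module.Finite R ((homologyFunctor (ModuleCat R) i).obj Y)) :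
    ∃ (S : DerivedCategory (ModuleCat R)) (p : S ⟶ Y), TriDim.isSumOfShifts (ringObject R) S ∧
      ∀ i, Epi ((homologyFunctor (ModuleCat R) i).map p) := by
  obtain ⟨⟨a, _⟩, ⟨b, _⟩⟩ := hb
  choose s hs using fun i => (hfin i).fg_top
  choose φ hφ using fun i => exists_mem_range_homologyFunctor_map (Y := Y) (i := i)
  let ι := Σ i : Finset.Icc a b, s i
  let p := biproduct.desc fun j : ι => φ j.1 j.2
  refine ⟨_, p, TriDim.isSumOfShifts_biproduct _ _, fun i => ?_⟩
  by_cases hi : i ∈ Finset.Icc a b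
  · rw [ModuleCat.epi_iff_range_eq_top, eq_top_iff, ← hs i, Submodule.span_le]
    intro y hy
    obtain ⟨x, hx⟩ := hφ i y
    refine ⟨(homologyFunctor (ModuleCat R) i).map (biproduct.ι _ (⟨⟨i, hi⟩, ⟨y, hy⟩⟩ : ι)) x, ?_⟩
    rw [← ModuleCat.comp_apply, ← Functor.map_comp, biproduct.ι_desc]
    exact hx
  · have hzero : IsZero ((homologyFunctor (ModuleCat R) i).obj Y) := by
      rw [Finset.mem_Icc, not_and_or, not_le, not_le] at hi
      exact hi.elim (fun h => isZero_of_isGE Y a i h) fun h => isZero_of_isLE Y b i h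
    exact ⟨fun _ _ _ => hzero.eq_of_src _ _⟩

end Cover

end HomologyCover

open HomologyCover

theorem rouquier_dim_le_global_dimension_general (R : Type u) [Ring R] [IsNoetherianRing R] (n : ℕ)
    [HasDerivedCategory.{w} (ModuleCat.{u} R)] (X : DerivedCategory (ModuleCat.{u} R))
    (hb : TStructure.t.bounded X)
    (hfin : ∀ i, Module.Finite R ((homologyFunctor (ModuleCat R) i).obj X))
    (hpd : ∀ i, HasProjectiveDimensionLE ((homologyFunctor (ModuleCat R) i).obj X) n) :
    X ∈ TriDim.thick ((singleFunctor (ModuleCat R) 0).obj (ModuleCat.of R R)) n := by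
  induction n generalizing X with
  | zero =>
    obtain ⟨S, p, hS, hp⟩ := exists_isSumOfShifts_epi_homologyFunctor_map hb hfin
    obtain ⟨X', q, r, hT⟩ := distinguished_cocone_triangle p
    obtain rfl : q = 0 := ProjectiveHomology.eq_zero_of_homologyFunctor_map_eq_zero
      (fun i => (projective_iff_hasProjectiveDimensionLE_zero _).2 (hpd i))
      fun i => (HomologySequence.epi_homologyMap_mor₁_iff _ hT i).1 (hp i)
    exact TriDim.mem_thick_zero_of_distTriang hT hS
  | succ n ih =>
    obtain ⟨S, p, hS, hp⟩ := exists_isSumOfShifts_epi_homologyFunctor_map hb hfin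
    obtain ⟨X', q, r, hT⟩ := distinguished_cocone_triangle p
    have := projective_of_self R
    have hSb : TStructure.t.bounded S := TriDim.prop_of_isSumOfShifts (bounded_singleFunctor _) hS
    have hSproj := projective_homologyFunctor_of_isSumOfShifts
      (projective_homologyFunctor_singleFunctor _) hS
    have hSfin := finite_homologyFunctor_of_isSumOfShifts
      (finite_homologyFunctor_singleFunctor _) hS
    refine TriDim.mem_thick_succ_of_distTriang hT hS (ih X' ?_ ?_ ?_)
    · exact TStructure.t.bounded.ext_of_isTriangulatedClosed₃ _ hT hSb hb
    · exact finite_homologyFunctor_cone hT hSfin hp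
    · exact hasProjectiveDimensionLE_homologyFunctor_cone hT hSproj hp hpd

open DerivedCategory in
/-- Let `R` be a Noetherian ring of global dimension at most `n` (every
module admits a projective resolution of length `n`).  Then `Perf(R)` is generated by `R` in
`n` cones: every bounded complex of finitely generated projective `R`-modules lies in
`⟨R⟩ₙ` inside the derived category.  In particular `Rdim Perf(R) ≤ n`. -/
theorem rouquier_dim_le_global_dimension
    (R : Type) [Ring R] [IsNoetherianRing R] (n : ℕ)
    [HasDerivedCategory.{0} (ModuleCat.{0} R)]
    -- `R` has global dimension at most `n`
    (hgldim : ∀ M : ModuleCat.{0} R, ∃ (P : ℕ → ModuleCat.{0} R)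
      (f : ∀ i : ℕ, P (i + 1) ⟶ P i) (π : P 0 ⟶ M),
        (∀ i, CategoryTheory.Projective (P i)) ∧ Function.Surjective π ∧
        Function.Exact (f 0) π ∧ (∀ i, Function.Exact (f (i + 1)) (f i)) ∧
        (∀ i, n < i → Limits.IsZero (P i))) :
    -- every bounded complex of finitely generated projective modules lies in `⟨R⟩ₙ`,
    (∀ X : CochainComplex (ModuleCat.{0} R) ℤ,
      (∀ i, CategoryTheory.Projective (X.X i)) →
      (∀ i, Module.Finite R (X.X i)) →
      (∃ a b : ℤ, ∀ i, (i < a ∨ b < i) → Limits.IsZero (X.X i)) →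
      DerivedCategory.Q.obj X ∈
        TriDim.thick ((DerivedCategory.singleFunctor (ModuleCat.{0} R) 0).obj
          (ModuleCat.of R R)) n) ∧
    -- in particular the Rouquier dimension of `Perf(R)` is at most `n`
    (∃ E : DerivedCategory (ModuleCat.{0} R),
      ∀ X : CochainComplex (ModuleCat.{0} R) ℤ,
        (∀ i, CategoryTheory.Projective (X.X i)) →
        (∀ i, Module.Finite R (X.X i)) →
        (∃ a b : ℤ, ∀ i, (i < a ∨ b < i) → Limits.IsZero (X.X i)) →
        DerivedCategory.Q.obj X ∈ TriDim.thick E n) := by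
  have hpd (M : ModuleCat.{0} R) : HasProjectiveDimensionLE M n := by
    obtain ⟨P, f, π, hP, hπ, hfπ, hf, hzero⟩ := hgldim M
    exact hasProjectiveDimensionLT_of_resolution hP hπ hfπ hf hzero
  have hmem (X : CochainComplex (ModuleCat.{0} R) ℤ) (hfin : ∀ i, Module.Finite R (X.X i))
      (hbdd : ∃ a b : ℤ, ∀ i, (i < a ∨ b < i) → IsZero (X.X i)) :
      Q.obj X ∈ TriDim.thick (ringObject R) n :=
    let ⟨_, _, hX⟩ := hbdd
    rouquier_dim_le_global_dimension_general R n _ (bounded_Q_obj hX)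
      (fun _ => finite_homologyFunctor_Q_obj) fun _ => hpd _
  exact ⟨fun X _ => hmem X, ringObject R, fun X _ => hmem X⟩
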